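/- Let N ≥ 1 and let α be a planar pair partition of {1,…,4N} containing no link of the form {2j−1,2j} for any j ∈ {1,…,2N}. Then for every y_1<⋯<y_{2N} the following limit exists in ℝ: the limit of Z_α(x_1,…,x_{4N}) / ∏_{j=1}^{2N}(x_{2j}−x_{2j−1})^{1/2}, taken over x in the chamber x_1<⋯<x_{4N} as x_{2j−1}→y_j and x_{2j}→y_j for every j ∈ {1,…,2N} simultaneously. -/

import Mathlib

/-!
Let `c β = (M⁻¹)_{α,β}`, extended by zero (`cext`) from partitions to all sign sequences.

**Oddness.** If `σ` has distinct steps at the two points of the slot `{2j, 2j+1}`, exchanging them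
turns `c` into `-c` (`cext_flipAt`). Indeed, for a partition `γ` containing the link `{2j, 2j+1}`
the relation `β ⟵ γ` depends on the step sequence of `β` only up to the exchange, and
`∑ β, c β * M β γ = 0` because `γ ≠ α` and `c * M` is the indicator of `α`. As
`γ` varies these equations form a triangular system for the sums of `c` over pairs of exchanged
sequences (`openerSum_lt`), so all these sums vanish.

**Averaging.** Let `σ` range over the sign sequences, and let `act η σ` multiply both steps of every
peak or valley slot `j` by `η j = ±1`. By oddness, `pureZ α` is the average over `η` of
`∑ σ, c σ * (∏ j ∈ S, η j) * U_{act η σ}`, with `S` the set of peak or valley slots of `σ`. After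
division by the fusion normalization, the factors of `U_{act η σ}` internal to the slots become
`1 / ∏ j ∈ S, δ j`, where `δ j` is the width of the slot `j` (`internal_div`). It remains to see
that the Fourier coefficient in `η` with index `S` of the other factors is divisible by
`∏ j ∈ S, δ j` with convergent quotient, which is the property `Good`.

**Divisibility.** The constant `1` is `Good`, and so is the product of a `Good` family with a
multiplier (`Mult`); multipliers include convergent functions and `η j * δ j`, and are closed under
sums and products. The coupling of two slots is a power with exponent `±1/2` of a ratio `R` such
that `R - 1` is a convergent multiple of the widths of the peak or valley slots involved. Since
`R ^ (±1/2)` is a convergent function plus `±` a convergent multiple of `R - 1`, it is a multiplier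
(`mult_rpow`, `mult_cross`).

When `Mmat` is not invertible its `⁻¹` is `0` by convention, and the limit is trivially `0`.
-/

open Filter Finset
open scoped BigOperators Classical Topology

noncomputable section

/-- The open chamber `x 0 < x 1 < ⋯ < x (n-1)`. -/
def chamber (n : ℕ) : Set (Fin n → ℝ) := {x | ∀ i j : Fin n, i < j → x i < x j}

/-- Planar pair partitions of `{0, …, 2N-1}` (i.e. of `{1,…,2N}` in 1-based labelling),
encoded as noncrossing fixed-point-free involutions: the links are the pairs `{i, f i}`. -/
def PlanarPair (N : ℕ) : Type :=
  {f : Fin (2 * N) → Fin (2 * N) //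
    (∀ i, f (f i) = i) ∧ (∀ i, f i ≠ i) ∧
      ∀ i j, i < j → j < f i → i < f j ∧ f j < f i}

instance (N : ℕ) : Fintype (PlanarPair N) := by
  unfold PlanarPair; infer_instance

/-- The Dyck step sequence of a planar pair partition: `+1` at openers, `-1` at closers. -/
def pairSign {N : ℕ} (α : PlanarPair N) (i : Fin (2 * N)) : ℝ :=
  if i < α.val i then 1 else -1

/-- The conformal block of a sign sequence: `∏_{i<j} (x_j - x_i)^{σ_i σ_j / 2}`. -/
def cblock {n : ℕ} (σ : Fin n → ℝ) (x : Fin n → ℝ) : ℝ :=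
  ∏ p ∈ univ.filter (fun p : Fin n × Fin n => p.1 < p.2),
    (x p.2 - x p.1) ^ (σ p.1 * σ p.2 / 2)

/-- `σ` is the step sequence of a Dyck path. -/
def IsDyck {n : ℕ} (σ : Fin n → ℝ) : Prop :=
  (∀ i, σ i = 1 ∨ σ i = -1) ∧
    (∀ k : Fin n, 0 ≤ ∑ i ∈ univ.filter (fun i : Fin n => i ≤ k), σ i) ∧
    ∑ i, σ i = 0

/-- The relation `α ⟵ β`: every link of `β` joins an opener of `α` to a closer of `α`. -/
def kwRel {N : ℕ} (α β : PlanarPair N) : Prop :=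
  ∀ i, (i < α.val i) ↔ ¬ β.val i < α.val (β.val i)

/-- The incidence matrix `M` of the relation `⟵`. -/
def Mmat (N : ℕ) : Matrix (PlanarPair N) (PlanarPair N) ℝ :=
  fun α β => if kwRel α β then 1 else 0

/-- The κ = 4 pure partition functions `Z_α = Σ_β (M⁻¹)_{α,β} U_β`. -/
def pureZ {N : ℕ} (α : PlanarPair N) (x : Fin (2 * N) → ℝ) : ℝ :=
  ∑ β : PlanarPair N, (Mmat N)⁻¹ α β * cblock (pairSign β) x

/-- Partial derivative in the `i`-th coordinate. -/
def pd {n : ℕ} (i : Fin n) (f : (Fin n → ℝ) → ℝ) : (Fin n → ℝ) → ℝ :=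
  fun x => fderiv ℝ f x (Pi.single i 1)

/-- Doubling a configuration point: the limit point of total fusion. -/
def dup {N : ℕ} (y : Fin (2 * N) → ℝ) : Fin (2 * (2 * N)) → ℝ :=
  fun i => y ⟨i.val / 2, by have := i.2; omega⟩

/-- The fusion normalization `∏_j (x_{2j} - x_{2j-1})^{1/2}`. -/
def fuseDenom {N : ℕ} (x : Fin (2 * (2 * N)) → ℝ) : ℝ :=
  ∏ j : Fin (2 * N),
    (x ⟨2 * j.val + 1, by have := j.2; omega⟩ - x ⟨2 * j.val, by have := j.2; omega⟩) ^
      ((1 : ℝ) / 2)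

/-- `α` contains no link of the form `{2j-1, 2j}` (1-based). -/
def noFuseLink {N : ℕ} (α : PlanarPair (2 * N)) : Prop :=
  ∀ j : Fin (2 * N),
    α.val ⟨2 * j.val, by have := j.2; omega⟩ ≠ ⟨2 * j.val + 1, by have := j.2; omega⟩

/-- The fused pure partition function `Ẑ_α`, defined as the fusion limit. -/
def fusedZ {N : ℕ} (α : PlanarPair (2 * N)) (y : Fin (2 * N) → ℝ) : ℝ :=
  limUnder (𝓝[chamber (2 * (2 * N))] dup y) fun x => pureZ α x / fuseDenom x

/-- The single-fusion of a conformal block with a slope at `j` (0-based `j`, `j+1`);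
the fused point `ξ` sits at coordinate `j`, and coordinate `j+1` is ignored. -/
def Ufuse {n : ℕ} (σ : Fin n → ℝ) (j : ℕ) (hj : j + 1 < n) (x : Fin n → ℝ) : ℝ :=
  (∏ p ∈ univ.filter (fun p : Fin n × Fin n =>
      p.1 < p.2 ∧ p.1.val ≠ j ∧ p.1.val ≠ j + 1 ∧ p.2.val ≠ j ∧ p.2.val ≠ j + 1),
    (x p.2 - x p.1) ^ (σ p.1 * σ p.2 / 2)) *
  ∏ i ∈ univ.filter (fun i : Fin n => i.val ≠ j ∧ i.val ≠ j + 1),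
    |x i - x ⟨j, by omega⟩| ^ (σ i * σ ⟨j, by omega⟩)

/-- The single-fusion `V_{σ/∨_j}` of a conformal block with a local minimum at `j`. -/
def Vfuse {n : ℕ} (σ : Fin n → ℝ) (j : ℕ) (hj : j + 1 < n) (x : Fin n → ℝ) : ℝ :=
  (∏ p ∈ univ.filter (fun p : Fin n × Fin n =>
      p.1 < p.2 ∧ p.1.val ≠ j ∧ p.1.val ≠ j + 1 ∧ p.2.val ≠ j ∧ p.2.val ≠ j + 1),
    (x p.2 - x p.1) ^ (σ p.1 * σ p.2 / 2)) *
  ∑ i ∈ univ.filter (fun i : Fin n => i.val ≠ j ∧ i.val ≠ j + 1),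
    σ i * σ ⟨j, by omega⟩ / (x i - x ⟨j, by omega⟩)

/-- The single-fusion `Z_{α/⨿_j}` of a pure partition function. -/
def Zfuse {N : ℕ} (α : PlanarPair N) (j : ℕ) (hj : j + 1 < 2 * N) (x : Fin (2 * N) → ℝ) : ℝ :=
  (∑ β ∈ univ.filter (fun β : PlanarPair N =>
      pairSign β ⟨j, by omega⟩ = -1 ∧ pairSign β ⟨j + 1, hj⟩ = 1),
    (Mmat N)⁻¹ α β * Vfuse (pairSign β) j hj x) +
  ∑ β ∈ univ.filter (fun β : PlanarPair N =>
      pairSign β ⟨j, by omega⟩ = pairSign β ⟨j + 1, hj⟩),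
    (Mmat N)⁻¹ α β * Ufuse (pairSign β) j hj x

/-- The chamber `x_1 < ⋯ < x_{j-1} < ξ < x_{j+2} < ⋯` for single fusion at `j`:
coordinate `j` carries `ξ` and coordinate `j+1` is ignored. -/
def fusedChamber (n j : ℕ) : Set (Fin n → ℝ) :=
  {x | ∀ k l : Fin n, k < l → k.val ≠ j + 1 → l.val ≠ j + 1 → x k < x l}

/-- Successor inside `Fin n` (identity at the top). -/
def fsucc {n : ℕ} (e : Fin n) : Fin n := if h : e.val + 1 < n then ⟨e.val + 1, h⟩ else e

/-- The set `J_n^m` of permutations from the fusion combinatorics. -/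
def Jset (n m : ℕ) : Finset (Equiv.Perm (Fin n)) :=
  univ.filter fun σ =>
    (∀ k l : Fin n, k.val % 2 = 0 → l.val % 2 = 0 → k.val < l.val → l.val < 2 * m →
      σ k < σ l) ∧
    (∀ k : Fin n, k.val % 2 = 0 → k.val < 2 * m → σ k < σ (fsucc k)) ∧
    ∀ k l : Fin n, 2 * m ≤ k.val → k.val < l.val → σ k < σ l


/-! ### Step sequences and the matrix `Mmat` -/

/-- The step sequence of `β` with values in the sign group `ℤˣ`. -/
def osgn {K : ℕ} (β : PlanarPair K) (i : Fin (2 * K)) : ℤˣ := if i < β.val i then 1 else -1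

/-- The sum of the positions of the openers, a statistic for which `Mmat` is triangular. -/
def openerSum {K : ℕ} (β : PlanarPair K) : ℕ := ∑ i, if i < β.val i then i.val else 0

/-- Reverse the two steps at positions `p` and `q`. -/
def flipAt {n : ℕ} (p q : Fin n) (σ : Fin n → ℤˣ) : Fin n → ℤˣ :=
  fun i => if i = p ∨ i = q then -σ i else σ i

/-- A coefficient family on planar pair partitions, viewed as a function on all sign sequences
that vanishes on sequences that are not step sequences. -/
def cext {K : ℕ} (c : PlanarPair K → ℝ) (σ : Fin (2 * K) → ℤˣ) : ℝ :=
  ∑ β, if osgn β = σ then c β else 0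

lemma pairSign_eq_osgn {K : ℕ} (β : PlanarPair K) :
    pairSign β = fun i => ((osgn β i : ℤ) : ℝ) := by
  funext i
  unfold pairSign osgn
  split_ifs <;> simp

lemma osgn_eq_one {K : ℕ} (β : PlanarPair K) (i : Fin (2 * K)) :
    osgn β i = 1 ↔ i < β.val i := by
  unfold osgn
  split_ifs with h <;> simp [h]

lemma osgn_eq_neg_one {K : ℕ} (β : PlanarPair K) (i : Fin (2 * K)) :
    osgn β i = -1 ↔ β.val i < i := by
  have h2 := β.2.2.1 i
  unfold osgn
  split_ifs with h
  · simp [h.le]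
  · simp only [true_iff]
    exact lt_of_le_of_ne (not_lt.mp h) h2

lemma kwRel_iff {K : ℕ} (β γ : PlanarPair K) :
    kwRel β γ ↔ ∀ i, osgn β i ≠ osgn β (γ.val i) := by
  unfold kwRel osgn
  refine forall_congr' fun i => ?_
  split_ifs with h1 h2 h2 <;> simp [h1, h2]

lemma osgn_injective {K : ℕ} : Function.Injective (osgn (K := K)) := by
  intro β γ h
  have hs : ∀ i, i < β.val i ↔ i < γ.val i := fun i => by
    rw [← osgn_eq_one, ← osgn_eq_one, h]
  have hb := β.2
  have hg := γ.2
  obtain ⟨hb1, hb2, hb3⟩ := hb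
  obtain ⟨hg1, hg2, hg3⟩ := hg
  have key : ∀ n : ℕ, ∀ i, i < β.val i → (β.val i).val - i.val = n → γ.val i = β.val i := by
    intro n
    induction n using Nat.strong_induction_on with
    | _ n ih =>
      intro i hi hn
      -- by induction the two matchings agree strictly inside the link of `i` in `β`
      have inner : ∀ k, i < k → k < β.val i → γ.val k = β.val k := by
        intro k hk1 hk2
        obtain ⟨h1, h2⟩ := hb3 i k hk1 hk2
        by_cases hk : k < β.val k
        · exact ih _ (by omega) k hk rfl
        · have hk' : β.val k < k := lt_of_le_of_ne (not_lt.mp hk) (hb2 k)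
          have := ih (k.val - (β.val k).val) (by omega) (β.val k) (by rw [hb1]; exact hk')
            (by rw [hb1])
          rw [hb1] at this
          rw [← this, hg1, this]
      have hgi := (hs i).1 hi
      rcases lt_trichotomy (γ.val i) (β.val i) with hlt | heq | hgt
      · have h1 := inner _ hgi hlt
        rw [hg1] at h1
        have h2 := hb1 (γ.val i)
        rw [← h1] at h2
        rw [h2]
      · exact heq
      · obtain ⟨h1, h2⟩ := hg3 i (β.val i) hi hgt
        have h3 : γ.val (β.val i) < β.val i := by
          refine lt_of_le_of_ne (not_lt.mp fun hh => ?_) (hg2 _)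
          have := (hs (β.val i)).2 hh
          rw [hb1] at this
          exact absurd this (not_lt.mpr hi.le)
        have h4 := inner _ h1 h3
        rw [hg1] at h4
        have h5 := congrArg β.val h4
        rw [hb1, hb1] at h5
        exact absurd h5 (ne_of_lt h1)
  apply Subtype.ext
  funext i
  by_cases hi : i < β.val i
  · exact (key _ i hi rfl).symm
  · have hi' : β.val i < i := lt_of_le_of_ne (not_lt.mp hi) (hb2 i)
    have := key _ (β.val i) (by rw [hb1]; exact hi') rfl
    rw [hb1] at this
    rw [← this, hg1, this]

/-- Triangularity of `Mmat`: each link of `γ` contributes its smaller end to `openerSum γ`, and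
one of its two ends to `openerSum β`. -/
lemma openerSum_lt {K : ℕ} {β γ : PlanarPair K} (h : kwRel β γ) (hne : β ≠ γ) :
    openerSum γ < openerSum β := by
  have hinv : ∀ f : Fin (2 * K) → ℕ, ∑ i, f (γ.val i) = ∑ i, f i := fun f =>
    Equiv.sum_comp (Function.Involutive.toPerm γ.val γ.2.1) f
  have hdouble : ∀ δ : PlanarPair K, openerSum δ + openerSum δ =
      ∑ i, ((if i < δ.val i then i.val else 0) +
        (if γ.val i < δ.val (γ.val i) then (γ.val i).val else 0)) := by
    intro δ
    rw [Finset.sum_add_distrib, hinv (fun i => if i < δ.val i then i.val else 0)]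
    rfl
  have hex : ∃ i, osgn β i ≠ osgn γ i := by
    by_contra hcon
    push Not at hcon
    exact hne (osgn_injective (funext hcon))
  have h2 : openerSum γ + openerSum γ < openerSum β + openerSum β := by
    rw [hdouble, hdouble]
    apply Finset.sum_lt_sum
    · intro i _
      have h1 := h i
      have h3 := γ.2.1 i
      have h4 := γ.2.2.1 i
      rw [h3]
      split_ifs <;> simp_all <;> omega
    · obtain ⟨i, hi⟩ := hex
      refine ⟨i, mem_univ _, ?_⟩
      have h1 := h i
      have h3 := γ.2.1 i
      have h4 := γ.2.2.1 i
      rw [h3]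
      unfold osgn at hi
      split_ifs <;> simp_all <;> omega
  omega

/-- Replacing the links `{a, p}`, `{q, b}` at a valley `p, q` by `{a, b}`, `{p, q}` turns the
valley into a peak. -/
lemma exists_peak {K : ℕ} (β : PlanarPair K) (p q : Fin (2 * K)) (hpq : q.val = p.val + 1)
    (hp : β.val p < p) (hq : q < β.val q) :
    ∃ γ : PlanarPair K, osgn γ = flipAt p q (osgn β) := by
  obtain ⟨hb1, hb2, hb3⟩ := β.2
  have hpq' : p < q := by omega
  let f : Fin (2 * K) → Fin (2 * K) := fun i =>
    if i = p then q else if i = q then p else if i = β.val p then β.val q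
      else if i = β.val q then β.val p else β.val i
  have hpa := hb1 p
  have hqb := hb1 q
  have hcase : ∀ k, (k = p ∧ f k = q) ∨ (k = q ∧ f k = p) ∨ (k = β.val p ∧ f k = β.val q) ∨
      (k = β.val q ∧ f k = β.val p) ∨ (f k = β.val k ∧ k ≠ p ∧ k ≠ q ∧ k ≠ β.val p ∧
        k ≠ β.val q ∧ β.val k ≠ p ∧ β.val k ≠ q) := by
    intro k
    have hk := hb1 k
    by_cases k1 : k = p
    · left; simp [f, k1]
    by_cases k2 : k = q
    · right; left; simp [f, k2, hpq'.ne']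
    by_cases k3 : k = β.val p
    · right; right; left
      refine ⟨k3, ?_⟩
      simp only [f, if_neg k1, if_neg k2, if_pos k3]
    by_cases k4 : k = β.val q
    · right; right; right; left
      refine ⟨k4, ?_⟩
      simp only [f, if_neg k1, if_neg k2, if_neg k3, if_pos k4]
    · right; right; right; right
      refine ⟨?_, k1, k2, k3, k4, ?_, ?_⟩
      · simp only [f, if_neg k1, if_neg k2, if_neg k3, if_neg k4]
      · intro h; rw [h] at hk; exact k3 hk.symm
      · intro h; rw [h] at hk; exact k4 hk.symm
  have f1 : ∀ i, f (f i) = i := by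
    intro i; simp only [f]; grind
  have f2 : ∀ i, f i ≠ i := by
    intro i; simp only [f]; grind
  have f3 : ∀ i j, i < j → j < f i → i < f j ∧ f j < f i := by
    intro i j h1 h2
    have t1 := hb3 i j
    have t2 := hb3 (β.val p) j
    have t3 := hb3 q j
    have t4 := hb3 i p
    have t5 := hb3 i q
    have t6 := hb3 i (β.val p)
    have t7 := hb3 i (β.val q)
    rw [hpa] at t2 t6
    rw [hqb] at t7
    rcases hcase i with ⟨hi, e⟩ | ⟨hi, e⟩ | ⟨hi, e⟩ | ⟨hi, e⟩ | ⟨e, hi⟩ <;>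
    rcases hcase j with ⟨hj, e'⟩ | ⟨hj, e'⟩ | ⟨hj, e'⟩ | ⟨hj, e'⟩ | ⟨e', hj⟩ <;>
    rw [e] at h2 ⊢ <;> rw [e'] <;> omega
  refine ⟨⟨f, f1, f2, f3⟩, ?_⟩
  funext i
  have hp1 : osgn β p = -1 := (osgn_eq_neg_one β p).2 hp
  have hq1 : osgn β q = 1 := (osgn_eq_one β q).2 hq
  by_cases hpi : i = p
  · subst hpi
    simp only [flipAt, true_or, if_true, hp1, neg_neg]
    refine (osgn_eq_one _ _).2 ?_
    show i < f i
    simpa [f] using hpq'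
  by_cases hqi : i = q
  · subst hqi
    simp only [flipAt, or_true, if_true, hq1]
    refine (osgn_eq_neg_one _ _).2 ?_
    show f i < i
    simpa [f, hpi] using hpq'
  simp only [flipAt, hpi, hqi, or_self, if_false]
  have hlt : i < f i ↔ i < β.val i := by
    rcases hcase i with ⟨hi, e⟩ | ⟨hi, e⟩ | ⟨hi, e⟩ | ⟨hi, e⟩ | ⟨e, hi⟩
    · exact absurd hi hpi
    · exact absurd hi hqi
    · rw [e, hi, hpa]; omega
    · rw [e, hi, hqb]; omega
    · rw [e]
  simp only [osgn, hlt]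

lemma peak_link {K : ℕ} (β : PlanarPair K) (p q : Fin (2 * K)) (hpq : q.val = p.val + 1)
    (hp : osgn β p = 1) (hq : osgn β q = -1) : β.val p = q := by
  rw [osgn_eq_one] at hp
  rw [osgn_eq_neg_one] at hq
  by_contra hne
  have := (β.2.2.2 p q (by omega) (by omega)).1
  omega

lemma flipAt_flipAt {n : ℕ} (p q : Fin n) (σ : Fin n → ℤˣ) : flipAt p q (flipAt p q σ) = σ := by
  funext i
  unfold flipAt
  split_ifs <;> simp

lemma exists_of_cext_ne_zero {K : ℕ} {c : PlanarPair K → ℝ} {σ : Fin (2 * K) → ℤˣ}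
    (h : cext c σ ≠ 0) : ∃ β, osgn β = σ := by
  obtain ⟨β, -, hβ⟩ := Finset.exists_ne_zero_of_sum_ne_zero h
  exact ⟨β, by by_contra hne; simp [hne] at hβ⟩

/-- The weighted sum over planar pair partitions as a sum over all sign sequences. -/
lemma sum_cext {K : ℕ} (c : PlanarPair K → ℝ) (F : (Fin (2 * K) → ℤˣ) → ℝ) :
    ∑ β, c β * F (osgn β) = ∑ σ, cext c σ * F σ := by
  unfold cext
  simp_rw [Finset.sum_mul]
  rw [Finset.sum_comm]
  refine Finset.sum_congr rfl fun β _ => ?_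
  simp [ite_mul]

/-- If the row vector `c` times `Mmat` vanishes at all `γ` containing the link `{p, q}` (`p`, `q`
consecutive), then exchanging a peak and a valley at `p, q` reverses the sign of `c`. -/
lemma cext_flipAt {K : ℕ} (c : PlanarPair K → ℝ) (p q : Fin (2 * K)) (hpq : q.val = p.val + 1)
    (hc : ∀ γ : PlanarPair K, γ.val p = q → ∑ β, c β * Mmat K β γ = 0)
    (σ : Fin (2 * K) → ℤˣ) (hσ : σ p ≠ σ q) : cext c (flipAt p q σ) = -cext c σ := by
  have hne : p ≠ q := by intro h; rw [h] at hpq; omega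
  let d : (Fin (2 * K) → ℤˣ) → ℝ := fun σ => cext c σ + cext c (flipAt p q σ)
  have dflip : ∀ σ, d (flipAt p q σ) = d σ := fun σ => by
    simp only [d, flipAt_flipAt]; ring
  -- a peaked sequence at which `d` does not vanish is a step sequence
  have dex : ∀ σ, σ p = 1 → σ q = -1 → d σ ≠ 0 → ∃ β, osgn β = σ := by
    intro σ h1 h2 hd
    by_cases h0 : cext c σ = 0
    · have h3 : cext c (flipAt p q σ) ≠ 0 := by simpa [d, h0] using hd
      obtain ⟨β, hβ⟩ := exists_of_cext_ne_zero h3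
      have hp : β.val p < p := by
        rw [← osgn_eq_neg_one, hβ]; simp [flipAt, h1]
      have hq : q < β.val q := by
        rw [← osgn_eq_one, hβ]; simp [flipAt, h2]
      obtain ⟨γ, hγ⟩ := exists_peak β p q hpq hp hq
      exact ⟨γ, by rw [hγ, hβ, flipAt_flipAt]⟩
    · exact exists_of_cext_ne_zero h0
  have dpeak : ∀ σ, σ p = 1 → σ q = -1 → d σ = 0 := by
    by_contra hcon
    push Not at hcon
    obtain ⟨σ₀, h1, h2, hd⟩ := hcon
    obtain ⟨β₀, rfl⟩ := dex σ₀ h1 h2 hd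
    let S : Finset (PlanarPair K) :=
      univ.filter fun β => osgn β p = 1 ∧ osgn β q = -1 ∧ d (osgn β) ≠ 0
    obtain ⟨γ, hγS, hmax⟩ := Finset.exists_max_image S openerSum ⟨β₀, by simp [S, h1, h2, hd]⟩
    obtain ⟨hγp, hγq, hγd⟩ : osgn γ p = 1 ∧ osgn γ q = -1 ∧ d (osgn γ) ≠ 0 := by
      simpa [S] using hγS
    have hlink := peak_link γ p q hpq hγp hγq
    have hlink' : γ.val q = p := by rw [← hlink, γ.2.1]
    let m : (Fin (2 * K) → ℤˣ) → ℝ := fun σ => if ∀ i, σ i ≠ σ (γ.val i) then 1 else 0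
    have mflip : ∀ σ, m (flipAt p q σ) = m σ := by
      intro σ
      have : (∀ i, flipAt p q σ i ≠ flipAt p q σ (γ.val i)) ↔ ∀ i, σ i ≠ σ (γ.val i) := by
        refine forall_congr' fun i => ?_
        have e1 : γ.val i = p ↔ i = q :=
          ⟨fun h => by rw [← γ.2.1 i, h, hlink], fun h => by rw [h, hlink']⟩
        have e2 : γ.val i = q ↔ i = p :=
          ⟨fun h => by rw [← γ.2.1 i, h, hlink'], fun h => by rw [h, hlink]⟩
        have e3 : (γ.val i = p ∨ γ.val i = q) ↔ (i = p ∨ i = q) := by rw [e1, e2, or_comm]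
        unfold flipAt
        simp only [e3]
        split_ifs <;> simp
      simp only [m, this]
    have hsum : ∑ σ, cext c σ * m σ = 0 := by
      rw [← sum_cext, ← hc γ hlink]
      refine Finset.sum_congr rfl fun β _ => ?_
      simp only [m, Mmat, kwRel_iff]
    have hsum' : ∑ σ, cext c (flipAt p q σ) * m σ = 0 := by
      rw [← hsum, ← Equiv.sum_comp (Function.Involutive.toPerm (flipAt p q) (flipAt_flipAt p q))
        (fun σ => cext c σ * m σ)]
      refine Finset.sum_congr rfl fun σ _ => ?_
      change cext c (flipAt p q σ) * m σ = cext c (flipAt p q σ) * m (flipAt p q σ)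
      rw [mflip]
    have hd0 : ∑ σ, d σ * m σ = 0 := by
      simp only [d, add_mul, Finset.sum_add_distrib, hsum, hsum', add_zero]
    -- a peaked `σ` contributing to the sum is a step sequence with no larger `openerSum`
    have only : ∀ σ, σ p = 1 → σ q = -1 → d σ * m σ ≠ 0 → σ = osgn γ := by
      intro σ h1 h2 h3
      obtain ⟨β, rfl⟩ := dex σ h1 h2 (left_ne_zero_of_mul h3)
      have hm : kwRel β γ := by
        rw [kwRel_iff]
        by_contra hh
        exact right_ne_zero_of_mul h3 (by simp only [m, if_neg hh])
      by_contra hh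
      have hlt := openerSum_lt hm (fun e => hh (by rw [e]))
      have := hmax β (by simp [S, h1, h2, left_ne_zero_of_mul h3])
      omega
    have hmγ : m (osgn γ) = 1 := by
      have : ∀ i, osgn γ i ≠ osgn γ (γ.val i) := by
        rw [← kwRel_iff]
        intro i
        rw [γ.2.1]
        have := γ.2.2.1 i
        omega
      simp only [m, if_pos this]
    have hneq : osgn γ ≠ flipAt p q (osgn γ) := by
      intro h
      have := congrFun h p
      simp [flipAt, hγp] at this
    rw [Finset.sum_eq_add (osgn γ) (flipAt p q (osgn γ)) hneq, mflip, dflip, hmγ] at hd0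
    · apply hγd; linarith
    · intro σ _ ⟨hs1, hs2⟩
      by_contra h3
      have hm : σ p ≠ σ q := by
        intro h
        apply right_ne_zero_of_mul h3
        simp only [m]
        rw [if_neg]
        intro hh
        exact hh p (by rw [hlink, h])
      rcases Int.units_eq_one_or (σ p) with h1 | h1
      · exact hs1 (only σ h1 (by
          rcases Int.units_eq_one_or (σ q) with h | h
          · exact absurd (h1.trans h.symm) hm
          · exact h) h3)
      · have h2 : σ q = 1 := by
          rcases Int.units_eq_one_or (σ q) with h | h
          · exact h
          · exact absurd (h1.trans h.symm) hm
        have := only (flipAt p q σ) (by simp [flipAt, h1]) (by simp [flipAt, h2])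
          (by rw [dflip, mflip]; exact h3)
        exact hs2 (by rw [← this, flipAt_flipAt])
    · simp
    · simp
  have hd : d σ = 0 := by
    rcases Int.units_eq_one_or (σ p) with h1 | h1
    · refine dpeak σ h1 ?_
      rcases Int.units_eq_one_or (σ q) with h | h
      · exact absurd (h1.trans h.symm) hσ
      · exact h
    · rw [← dflip]
      refine dpeak _ (by simp [flipAt, h1]) ?_
      rcases Int.units_eq_one_or (σ q) with h | h
      · simp [flipAt, h]
      · exact absurd (h1.trans h.symm) hσ
  simp only [d] at hd
  linarith

/-! ### Simultaneous flips in the slots -/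

/-- The left point of the slot `j`. -/
def lo {m : ℕ} (j : Fin m) : Fin (2 * m) := ⟨2 * j.val, by have := j.2; omega⟩

/-- The right point of the slot `j`. -/
def hi {m : ℕ} (j : Fin m) : Fin (2 * m) := ⟨2 * j.val + 1, by have := j.2; omega⟩

/-- The slot containing the index `i`. -/
def slot {m : ℕ} (i : Fin (2 * m)) : Fin m := ⟨i.val / 2, by have := i.2; omega⟩

/-- Multiply both steps in each slot `j` carrying a peak or a valley by `η j`; slots with two
equal steps are left alone. -/
def act {m : ℕ} (η : Fin m → ℤˣ) (σ : Fin (2 * m) → ℤˣ) : Fin (2 * m) → ℤˣ :=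
  fun i => if σ (lo (slot i)) = σ (hi (slot i)) then σ i else η (slot i) * σ i

/-- The real number `±1` given by a unit of `ℤ`. -/
def sg (u : ℤˣ) : ℝ := ((u : ℤ) : ℝ)

@[simp] lemma slot_lo {m : ℕ} (j : Fin m) : slot (lo j) = j := by
  apply Fin.ext; simp [slot, lo]

@[simp] lemma slot_hi {m : ℕ} (j : Fin m) : slot (hi j) = j := by
  apply Fin.ext; simp only [slot, hi]; omega

lemma eq_lo_or_hi {m : ℕ} (i : Fin (2 * m)) : i = lo (slot i) ∨ i = hi (slot i) := by
  simp only [Fin.ext_iff, slot, lo, hi]; omega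

@[simp] lemma sg_one : sg 1 = 1 := by simp [sg]
@[simp] lemma sg_neg (u : ℤˣ) : sg (-u) = -sg u := by simp [sg]
@[simp] lemma sg_mul (u v : ℤˣ) : sg (u * v) = sg u * sg v := by simp [sg]
lemma sg_mul_self (u : ℤˣ) : sg u * sg u = 1 := by
  rw [← sg_mul, Int.units_mul_self, sg_one]

lemma act_slot {m : ℕ} (η : Fin m → ℤˣ) (σ : Fin (2 * m) → ℤˣ) (j : Fin m) :
    act η σ (lo j) = act η σ (hi j) ↔ σ (lo j) = σ (hi j) := by
  unfold act
  simp only [slot_lo, slot_hi]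
  split_ifs with h <;> simp [h]

lemma act_act {m : ℕ} (η : Fin m → ℤˣ) (σ : Fin (2 * m) → ℤˣ) : act η (act η σ) = σ := by
  funext i
  rw [act]
  simp only [act_slot]
  simp only [act]
  split_ifs with h
  · rfl
  · rw [← mul_assoc, Int.units_mul_self, one_mul]

/-- A function on sign sequences that is odd under every single flip of a peak or valley slot
transforms under simultaneous flips by the product of the signs over these slots. -/
lemma odd_act {m : ℕ} (C : (Fin (2 * m) → ℤˣ) → ℝ)
    (hC : ∀ j σ, σ (lo j) ≠ σ (hi j) → C (flipAt (lo j) (hi j) σ) = -C σ)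
    (η : Fin m → ℤˣ) (σ : Fin (2 * m) → ℤˣ) :
    C (act η σ) = (∏ j ∈ univ.filter (fun j => σ (lo j) ≠ σ (hi j)), sg (η j)) * C σ := by
  have key : ∀ S : Finset (Fin m), C (act (fun j => if j ∈ S then η j else 1) σ) =
      (∏ j ∈ S, if σ (lo j) ≠ σ (hi j) then sg (η j) else 1) * C σ := by
    intro S
    induction S using Finset.induction_on with
    | empty =>
      simp only [Finset.notMem_empty, if_false, Finset.prod_empty, one_mul]
      congr 1
      funext i
      simp [act]
    | insert j S hj ih =>
      rw [Finset.prod_insert hj, mul_assoc, ← ih]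
      by_cases hs : σ (lo j) = σ (hi j)
      · rw [if_neg (not_not.mpr hs), one_mul]
        congr 1
        funext i
        by_cases hi : slot i = j
        · simp [act, hi, hs]
        · simp [act, hi]
      · rw [if_pos hs]
        rcases Int.units_eq_one_or (η j) with h1 | h1
        · rw [h1, sg_one, one_mul]
          congr 1
          funext i
          by_cases hi : slot i = j
          · simp [act, hi, h1]
          · simp [act, hi]
        · rw [h1, sg_neg, sg_one, neg_one_mul, ← hC j _ (by rw [Ne, act_slot]; exact hs)]
          congr 1
          funext i
          by_cases hij : slot i = j
          · have hor : i = lo j ∨ i = hi j := by have := eq_lo_or_hi i; rwa [hij] at this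
            simp [act, flipAt, hij, hs, hj, h1, hor]
          · have hor : ¬ (i = lo j ∨ i = hi j) := by
              rintro (h | h) <;> exact hij (by rw [h]; simp)
            simp [act, flipAt, hij, hor]
  have h := key univ
  simp only [Finset.mem_univ, if_true] at h
  rw [h, Finset.prod_filter]

/-! ### Families divisible by the slot widths after sign averaging -/

/-- `Φ` is a family of functions indexed by sign vectors `η`, such that each of its Fourier
coefficients, indexed by `S`, remains convergent after division by `∏ j ∈ S, δ j`. -/
def Good {X : Type*} (l : Filter X) {m : ℕ} (δ : Fin m → X → ℝ)
    (Φ : X → (Fin m → ℤˣ) → ℝ) : Prop :=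
  ∀ S : Finset (Fin m), ∃ L, Tendsto
    (fun x => (∑ η, (∏ j ∈ S, sg (η j)) * Φ x η) / ∏ j ∈ S, δ j x) l (𝓝 L)

/-- Multiplication by `f` preserves `Good`. -/
def Mult {X : Type*} (l : Filter X) {m : ℕ} (δ : Fin m → X → ℝ)
    (f : X → (Fin m → ℤˣ) → ℝ) : Prop :=
  ∀ Φ, Good l δ Φ → Good l δ fun x η => f x η * Φ x η

section Good

variable {X : Type*} {l : Filter X} {m : ℕ} {δ : Fin m → X → ℝ}

lemma good_one : Good l δ fun _ _ => 1 := by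
  intro S
  by_cases hS : S = ∅
  · subst hS
    exact ⟨_, by simpa using tendsto_const_nhds⟩
  · obtain ⟨j, hj⟩ := Finset.nonempty_iff_ne_empty.mpr hS
    -- reversing the sign `η j` negates the sum
    have h0 : ∑ η : Fin m → ℤˣ, ∏ k ∈ S, sg (η k) = 0 := by
      have h := Equiv.sum_comp (Equiv.mulLeft (Pi.mulSingle j (-1) : Fin m → ℤˣ))
        (fun η => ∏ k ∈ S, sg (η k))
      have h2 : ∀ η : Fin m → ℤˣ, ∏ k ∈ S, sg ((Equiv.mulLeft
          (Pi.mulSingle j (-1) : Fin m → ℤˣ)) η k) = -∏ k ∈ S, sg (η k) := by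
        intro η
        rw [← Finset.mul_prod_erase _ _ hj, ← Finset.mul_prod_erase S (fun k => sg (η k)) hj]
        have : ∏ k ∈ S.erase j, sg ((Equiv.mulLeft
            (Pi.mulSingle j (-1) : Fin m → ℤˣ)) η k) = ∏ k ∈ S.erase j, sg (η k) := by
          refine Finset.prod_congr rfl fun k hk => ?_
          simp [Pi.mulSingle_eq_of_ne (Finset.ne_of_mem_erase hk)]
        rw [this]
        simp
      simp only [h2, Finset.sum_neg_distrib] at h
      linarith
    exact ⟨0, by simpa [h0] using tendsto_const_nhds⟩

lemma Good.add {Φ Ψ : X → (Fin m → ℤˣ) → ℝ} (h1 : Good l δ Φ) (h2 : Good l δ Ψ) :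
    Good l δ fun x η => Φ x η + Ψ x η := by
  intro S
  obtain ⟨L1, h1⟩ := h1 S
  obtain ⟨L2, h2⟩ := h2 S
  refine ⟨_, (h1.add h2).congr fun x => ?_⟩
  simp only [mul_add, Finset.sum_add_distrib, add_div]

lemma Good.congr {Φ Ψ : X → (Fin m → ℤˣ) → ℝ} (h1 : Good l δ Φ)
    (h : ∀ᶠ x in l, ∀ η, Φ x η = Ψ x η) : Good l δ Ψ := by
  intro S
  obtain ⟨L1, h1⟩ := h1 S
  refine ⟨L1, h1.congr' ?_⟩
  filter_upwards [h] with x hx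
  simp only [hx]

lemma Mult.congr {f g : X → (Fin m → ℤˣ) → ℝ} (h1 : Mult l δ f)
    (h : ∀ᶠ x in l, ∀ η, f x η = g x η) : Mult l δ g := by
  intro Φ hΦ
  refine (h1 Φ hΦ).congr ?_
  filter_upwards [h] with x hx η
  rw [hx]

lemma Mult.add {f g : X → (Fin m → ℤˣ) → ℝ} (h1 : Mult l δ f) (h2 : Mult l δ g) :
    Mult l δ fun x η => f x η + g x η := by
  intro Φ hΦ
  refine ((h1 Φ hΦ).add (h2 Φ hΦ)).congr (Eventually.of_forall fun x η => ?_)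
  ring

lemma Mult.mul {f g : X → (Fin m → ℤˣ) → ℝ} (h1 : Mult l δ f) (h2 : Mult l δ g) :
    Mult l δ fun x η => f x η * g x η := by
  intro Φ hΦ
  refine (h1 _ (h2 Φ hΦ)).congr (Eventually.of_forall fun x η => ?_)
  ring

lemma mult_of_tendsto {f : X → ℝ} {L : ℝ} (h : Tendsto f l (𝓝 L)) :
    Mult l δ fun x _ => f x := by
  intro Φ hΦ S
  obtain ⟨L1, h1⟩ := hΦ S
  refine ⟨_, (h.mul h1).congr fun x => ?_⟩
  rw [← mul_div_assoc, Finset.mul_sum]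
  congr 1
  exact Finset.sum_congr rfl fun η _ => by ring

lemma Mult.prod {ι : Type*} (s : Finset ι) {f : ι → X → (Fin m → ℤˣ) → ℝ}
    (h : ∀ i ∈ s, Mult l δ (f i)) : Mult l δ fun x η => ∏ i ∈ s, f i x η := by
  induction s using Finset.induction_on with
  | empty => simpa using mult_of_tendsto (δ := δ) (tendsto_const_nhds (x := (1 : ℝ)) (f := l))
  | insert i s hi ih =>
    simp only [Finset.prod_insert hi]
    exact (h i (by simp)).mul (ih fun k hk => h k (by simp [hk]))

/-- The basic multiplier `η j * δ j`: it moves the Fourier coefficient `S` to the symmetric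
difference of `S` and `{j}`. -/
lemma mult_sign (j : Fin m) (hne : ∀ᶠ x in l, δ j x ≠ 0) (h0 : Tendsto (δ j) l (𝓝 0)) :
    Mult l δ fun x η => sg (η j) * δ j x := by
  intro Φ hΦ S
  by_cases hj : j ∈ S
  · obtain ⟨L1, h1⟩ := hΦ (S.erase j)
    refine ⟨L1, h1.congr' ?_⟩
    filter_upwards [hne] with x hx
    rw [← Finset.mul_prod_erase S (fun k => δ k x) hj]
    have : ∀ η : Fin m → ℤˣ, (∏ k ∈ S, sg (η k)) * (sg (η j) * δ j x * Φ x η) =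
        δ j x * ((∏ k ∈ S.erase j, sg (η k)) * Φ x η) := by
      intro η
      rw [← Finset.mul_prod_erase S (fun k => sg (η k)) hj]
      linear_combination (δ j x * (∏ k ∈ S.erase j, sg (η k)) * Φ x η) * sg_mul_self (η j)
    simp only [this, ← Finset.mul_sum]
    rw [mul_div_mul_left _ _ hx]
  · obtain ⟨L1, h1⟩ := hΦ (insert j S)
    refine ⟨_, ((h0.mul h0).mul h1).congr' ?_⟩
    filter_upwards [hne] with x hx
    simp only [Finset.prod_insert hj]
    have : ∀ η : Fin m → ℤˣ, (∏ k ∈ S, sg (η k)) * (sg (η j) * δ j x * Φ x η) =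
        δ j x * ((sg (η j) * ∏ k ∈ S, sg (η k)) * Φ x η) := by
      intro η; ring
    simp only [this, ← Finset.mul_sum]
    rw [mul_assoc, ← mul_div_assoc, mul_div_mul_left _ _ hx, ← mul_div_assoc]

lemma rpow_half_sign (R : ℝ) (hR : 0 < R) (e : ℤˣ) :
    R ^ (sg e / 2) = (√R + (√R)⁻¹) / 2 + sg e * ((R - 1) / (2 * √R)) := by
  have hs : 0 < √R := Real.sqrt_pos.mpr hR
  have h2 : √R * √R = R := Real.mul_self_sqrt hR.le
  have h3 : (R - 1) / (2 * √R) = (√R - (√R)⁻¹) / 2 := by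
    field_simp
    nlinarith
  rw [h3]
  rcases Int.units_eq_one_or e with rfl | rfl
  · rw [sg_one, ← Real.sqrt_eq_rpow]; ring
  · rw [sg_neg, sg_one, neg_div, Real.rpow_neg hR.le, ← Real.sqrt_eq_rpow]; ring

/-- If `R - 1` is divisible by `D`, then `R ^ (±1/2)` is a convergent even part plus a multiple
of the odd multiplier `± D`. -/
lemma mult_rpow {R D r : X → ℝ} {R₀ r₀ : ℝ} {ε : (Fin m → ℤˣ) → ℤˣ} (e : ℤˣ)
    (hR : Tendsto R l (𝓝 R₀)) (hR₀ : 0 < R₀) (hr : Tendsto r l (𝓝 r₀))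
    (hRD : ∀ᶠ x in l, R x - 1 = D x * r x) (hD : Mult l δ fun x η => sg (ε η) * D x) :
    Mult l δ fun x η => R x ^ (sg (ε η * e) / 2) := by
  have hs : Tendsto (fun x => √(R x)) l (𝓝 √R₀) := hR.sqrt
  have hs0 : √R₀ ≠ 0 := (Real.sqrt_pos.mpr hR₀).ne'
  have h1 := mult_of_tendsto (δ := δ) ((hs.add (hs.inv₀ hs0)).div_const 2)
  have h2 := mult_of_tendsto (δ := δ)
    ((hr.div (hs.const_mul 2) (mul_ne_zero two_ne_zero hs0)).const_mul (sg e))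
  refine (h1.add (hD.mul h2)).congr ?_
  filter_upwards [hRD, hR.eventually (lt_mem_nhds hR₀)] with x hx hpos η
  rw [rpow_half_sign _ hpos, hx, sg_mul]
  simp only [Pi.div_apply]
  ring

end Good

/-! ### Conformal blocks in terms of slots -/

/-- The width of the slot `j`, as a function of the configuration. -/
def width {m : ℕ} (j : Fin m) (x : Fin (2 * m) → ℝ) : ℝ := x (hi j) - x (lo j)

/-- The four factors of a conformal block that couple the slots `j` and `k`. -/
def cross {m : ℕ} (σ : Fin (2 * m) → ℝ) (x : Fin (2 * m) → ℝ) (j k : Fin m) : ℝ :=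
  (x (lo k) - x (lo j)) ^ (σ (lo j) * σ (lo k) / 2) *
    (x (hi k) - x (lo j)) ^ (σ (lo j) * σ (hi k) / 2) *
  ((x (lo k) - x (hi j)) ^ (σ (hi j) * σ (lo k) / 2) *
    (x (hi k) - x (hi j)) ^ (σ (hi j) * σ (hi k) / 2))

lemma prod_slots {m : ℕ} (g : Fin (2 * m) → ℝ) : ∏ i, g i = ∏ j : Fin m, g (lo j) * g (hi j) := by
  let e : Fin m × Fin 2 ≃ Fin (2 * m) := finProdFinEquiv.trans (finCongr (Nat.mul_comm m 2))
  have h0 : ∀ j, e (j, 0) = lo j := fun j => by apply Fin.ext; simp [e, lo]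
  have h1 : ∀ j, e (j, 1) = hi j := fun j => by apply Fin.ext; simp [e, hi]; omega
  rw [← Equiv.prod_comp e, Fintype.prod_prod_type]
  refine Finset.prod_congr rfl fun j _ => ?_
  rw [Fin.prod_univ_two, h0, h1]

lemma cblock_eq {m : ℕ} (σ : Fin (2 * m) → ℝ) (x : Fin (2 * m) → ℝ) :
    cblock σ x = (∏ j : Fin m, ∏ k : Fin m, if j < k then cross σ x j k else 1) *
      ∏ j : Fin m, (x (hi j) - x (lo j)) ^ (σ (lo j) * σ (hi j) / 2) := by
  have hsingle : ∀ j : Fin m, (x (hi j) - x (lo j)) ^ (σ (lo j) * σ (hi j) / 2) =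
      ∏ k : Fin m, if j = k then (x (hi j) - x (lo j)) ^ (σ (lo j) * σ (hi j) / 2) else 1 := by
    intro j; simp
  rw [cblock, Finset.prod_filter, Fintype.prod_prod_type, prod_slots, ← Finset.prod_mul_distrib]
  refine Finset.prod_congr rfl fun j _ => ?_
  rw [hsingle, prod_slots, prod_slots, ← Finset.prod_mul_distrib, ← Finset.prod_mul_distrib]
  refine Finset.prod_congr rfl fun k _ => ?_
  rcases lt_trichotomy j k with h | h | h
  · have a1 : lo j < lo k := by simp only [lo, Fin.lt_def]; omega
    have a2 : lo j < hi k := by simp only [lo, hi, Fin.lt_def]; omega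
    have a3 : hi j < lo k := by simp only [lo, hi, Fin.lt_def]; omega
    have a4 : hi j < hi k := by simp only [hi, Fin.lt_def]; omega
    simp [a1, a2, a3, a4, h, h.ne, cross]
  · subst h
    have a2 : lo j < hi j := by simp only [lo, hi, Fin.lt_def]; omega
    simp [a2, a2.not_gt]
  · have a1 : ¬ lo j < lo k := by simp only [lo, Fin.lt_def]; omega
    have a2 : ¬ lo j < hi k := by simp only [lo, hi, Fin.lt_def]; omega
    have a3 : ¬ hi j < lo k := by simp only [lo, hi, Fin.lt_def]; omega
    have a4 : ¬ hi j < hi k := by simp only [hi, Fin.lt_def]; omega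
    simp [h.ne', a1, a2, a3, a4, h.not_gt]

/-- Recombining half-integer powers whose exponents agree up to sign. -/
lemma four_rpow {u v w t : ℝ} (hu : 0 < u) (hv : 0 < v) (hw : 0 < w) (ht : 0 < t) (e : ℝ) :
    u ^ (e / 2) * v ^ (-e / 2) * (w ^ (e / 2) * t ^ (-e / 2)) = (u * w / (v * t)) ^ (e / 2) := by
  rw [Real.div_rpow (by positivity) (by positivity), Real.mul_rpow hu.le hw.le,
    Real.mul_rpow hv.le ht.le, neg_div, Real.rpow_neg hv.le, Real.rpow_neg ht.le]
  field_simp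

section Cross

variable {X : Type*} {l : Filter X} {m : ℕ} {δ : Fin m → X → ℝ} {a b c d : X → ℝ} {p q : ℝ}

/-- The power of `(c - a) (c - b) / ((d - a) (d - b))`, which is `1` up to a multiple of the width
`d - c`: the coupling of a slot `c < d` carrying a peak or a valley to a slot `a < b` with two
equal steps. -/
lemma mult_cross_right (hpq : p < q) (ha : Tendsto a l (𝓝 p)) (hb : Tendsto b l (𝓝 p))
    (hc : Tendsto c l (𝓝 q)) (hd : Tendsto d l (𝓝 q)) {ε : (Fin m → ℤˣ) → ℤˣ} (e : ℤˣ)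
    (hD : Mult l δ fun x η => sg (ε η) * (d x - c x)) :
    Mult l δ fun x η => ((c x - a x) * (c x - b x) / ((d x - a x) * (d x - b x))) ^
      (sg (ε η * e) / 2) := by
  have hgap : 0 < q - p := sub_pos.mpr hpq
  have hgg : 0 < (q - p) * (q - p) := mul_pos hgap hgap
  have hR : Tendsto (fun x => (c x - a x) * (c x - b x) / ((d x - a x) * (d x - b x))) l
      (𝓝 ((q - p) * (q - p) / ((q - p) * (q - p)))) :=
    ((hc.sub ha).mul (hc.sub hb)).div ((hd.sub ha).mul (hd.sub hb)) hgg.ne'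
  have hr : Tendsto (fun x => -(c x + d x - a x - b x) / ((d x - a x) * (d x - b x))) l
      (𝓝 (-(q + q - p - p) / ((q - p) * (q - p)))) :=
    (((hc.add hd).sub ha).sub hb).neg.div ((hd.sub ha).mul (hd.sub hb)) hgg.ne'
  refine mult_rpow e hR (div_pos hgg hgg) hr ?_ hD
  filter_upwards [(hd.sub ha).eventually (lt_mem_nhds hgap),
    (hd.sub hb).eventually (lt_mem_nhds hgap)] with x h1 h2
  field_simp
  ring

/-- The power of `(c - a) (d - a) / ((c - b) (d - b))`, which is `1` up to a multiple of the width
`b - a`: the coupling of a slot `a < b` carrying a peak or a valley to a slot `c < d` with two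
equal steps. -/
lemma mult_cross_left (hpq : p < q) (ha : Tendsto a l (𝓝 p)) (hb : Tendsto b l (𝓝 p))
    (hc : Tendsto c l (𝓝 q)) (hd : Tendsto d l (𝓝 q)) {ε : (Fin m → ℤˣ) → ℤˣ} (e : ℤˣ)
    (hD : Mult l δ fun x η => sg (ε η) * (b x - a x)) :
    Mult l δ fun x η => ((c x - a x) * (d x - a x) / ((c x - b x) * (d x - b x))) ^
      (sg (ε η * e) / 2) := by
  have hgap : 0 < q - p := sub_pos.mpr hpq
  have hgg : 0 < (q - p) * (q - p) := mul_pos hgap hgap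
  have hR : Tendsto (fun x => (c x - a x) * (d x - a x) / ((c x - b x) * (d x - b x))) l
      (𝓝 ((q - p) * (q - p) / ((q - p) * (q - p)))) :=
    ((hc.sub ha).mul (hd.sub ha)).div ((hc.sub hb).mul (hd.sub hb)) hgg.ne'
  have hr : Tendsto (fun x => (c x + d x - a x - b x) / ((c x - b x) * (d x - b x))) l
      (𝓝 ((q + q - p - p) / ((q - p) * (q - p)))) :=
    (((hc.add hd).sub ha).sub hb).div ((hc.sub hb).mul (hd.sub hb)) hgg.ne'
  refine mult_rpow e hR (div_pos hgg hgg) hr ?_ hD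
  filter_upwards [(hc.sub hb).eventually (lt_mem_nhds hgap),
    (hd.sub hb).eventually (lt_mem_nhds hgap)] with x h1 h2
  field_simp
  ring

/-- The power of the cross-ratio `(c - a) (d - b) / ((d - a) (c - b))`, which is `1` up to a
multiple of the product of both widths: the coupling of two slots each carrying a peak or a
valley. -/
lemma mult_cross_both (hpq : p < q) (ha : Tendsto a l (𝓝 p)) (hb : Tendsto b l (𝓝 p))
    (hc : Tendsto c l (𝓝 q)) (hd : Tendsto d l (𝓝 q)) {ε : (Fin m → ℤˣ) → ℤˣ} (e : ℤˣ)
    (hD : Mult l δ fun x η => sg (ε η) * ((b x - a x) * (d x - c x))) :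
    Mult l δ fun x η => ((c x - a x) * (d x - b x) / ((d x - a x) * (c x - b x))) ^
      (sg (ε η * e) / 2) := by
  have hgap : 0 < q - p := sub_pos.mpr hpq
  have hgg : 0 < (q - p) * (q - p) := mul_pos hgap hgap
  have hR : Tendsto (fun x => (c x - a x) * (d x - b x) / ((d x - a x) * (c x - b x))) l
      (𝓝 ((q - p) * (q - p) / ((q - p) * (q - p)))) :=
    ((hc.sub ha).mul (hd.sub hb)).div ((hd.sub ha).mul (hc.sub hb)) hgg.ne'
  have hr : Tendsto (fun x => 1 / ((d x - a x) * (c x - b x))) l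
      (𝓝 (1 / ((q - p) * (q - p)))) :=
    tendsto_const_nhds.div ((hd.sub ha).mul (hc.sub hb)) hgg.ne'
  refine mult_rpow e hR (div_pos hgg hgg) hr ?_ hD
  filter_upwards [(hd.sub ha).eventually (lt_mem_nhds hgap),
    (hc.sub hb).eventually (lt_mem_nhds hgap)] with x h1 h2
  field_simp
  ring

end Cross

lemma act_lo_hi {m : ℕ} (σ : Fin (2 * m) → ℤˣ) (η : Fin m → ℤˣ) {i : Fin m}
    (h : σ (lo i) ≠ σ (hi i)) :
    act η σ (lo i) = η i * σ (lo i) ∧ act η σ (hi i) = -(η i * σ (lo i)) := by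
  have h' : σ (hi i) = -σ (lo i) := by
    rcases Int.units_eq_one_or (σ (lo i)) with h1 | h1 <;>
    rcases Int.units_eq_one_or (σ (hi i)) with h2 | h2 <;> rw [h1, h2] at h ⊢ <;> simp at h ⊢
  constructor
  · simp only [act, slot_lo, if_neg h]
  · simp only [act, slot_hi, if_neg h]
    rw [h', mul_neg]

lemma act_lo_hi_of_eq {m : ℕ} (σ : Fin (2 * m) → ℤˣ) (η : Fin m → ℤˣ) {i : Fin m}
    (h : σ (lo i) = σ (hi i)) :
    act η σ (lo i) = σ (lo i) ∧ act η σ (hi i) = σ (lo i) := by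
  constructor
  · simp only [act, slot_lo, if_pos h]
  · simp only [act, slot_hi, if_pos h]
    exact h.symm

/-- The coupling of two slots at distinct limit points preserves `Good`. In each case it is a
half-integer power of a cross-ratio-like quantity that equals `1` up to a multiple of the widths
of those of the two slots carrying a peak or a valley. -/
lemma mult_cross {m : ℕ} {l : Filter (Fin (2 * m) → ℝ)} {y : Fin m → ℝ}
    (hlo : ∀ j, Tendsto (fun x : Fin (2 * m) → ℝ => x (lo j)) l (𝓝 (y j)))
    (hhi : ∀ j, Tendsto (fun x : Fin (2 * m) → ℝ => x (hi j)) l (𝓝 (y j)))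
    (hne : ∀ j, ∀ᶠ x in l, x (hi j) - x (lo j) ≠ 0)
    (σ : Fin (2 * m) → ℤˣ) (j k : Fin m) (hjk : y j < y k) :
    Mult l width fun x η => cross (fun i => sg (act η σ i)) x j k := by
  have hgap : 0 < y k - y j := sub_pos.mpr hjk
  have tu := (hlo k).sub (hlo j)
  have tv := (hhi k).sub (hlo j)
  have tw := (hlo k).sub (hhi j)
  have tt := (hhi k).sub (hhi j)
  have pu : ∀ᶠ x in l, 0 < x (lo k) - x (lo j) := tu.eventually_const_lt hgap
  have pv : ∀ᶠ x in l, 0 < x (hi k) - x (lo j) := tv.eventually_const_lt hgap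
  have pw : ∀ᶠ x in l, 0 < x (lo k) - x (hi j) := tw.eventually_const_lt hgap
  have pt : ∀ᶠ x in l, 0 < x (hi k) - x (hi j) := tt.eventually_const_lt hgap
  have hms : ∀ i : Fin m, Mult l width
      fun x η => sg (η i) * (x (hi i) - x (lo i)) := by
    intro i
    have h0 : Tendsto (fun x : Fin (2 * m) → ℝ => x (hi i) - x (lo i)) l (𝓝 0) := by
      have h := (hhi i).sub (hlo i)
      rwa [sub_self] at h
    exact mult_sign (δ := width) i (hne i) h0
  by_cases hj : σ (lo j) = σ (hi j) <;> by_cases hk : σ (lo k) = σ (hi k)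
  · -- two equal steps in both slots: the factors do not depend on `η`
    obtain ⟨s, hs⟩ : ∃ s : ℝ, s = sg (σ (lo j)) * sg (σ (lo k)) / 2 := ⟨_, rfl⟩
    have T := ((tu.rpow_const (p := s) (Or.inl hgap.ne')).mul
        (tv.rpow_const (p := s) (Or.inl hgap.ne'))).mul
      ((tw.rpow_const (p := s) (Or.inl hgap.ne')).mul
        (tt.rpow_const (p := s) (Or.inl hgap.ne')))
    refine (mult_of_tendsto T).congr (Eventually.of_forall fun x η => ?_)
    obtain ⟨e1, e2⟩ := act_lo_hi_of_eq σ η hj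
    obtain ⟨e3, e4⟩ := act_lo_hi_of_eq σ η hk
    simp only [cross, e1, e2, e3, e4, hs]
  · refine (mult_cross_right hjk (hlo j) (hhi j) (hlo k) (hhi k) (ε := fun η => η k)
      (σ (lo j) * σ (lo k)) (hms k)).congr ?_
    filter_upwards [pu, pv, pw, pt] with x hu hv hw ht η
    rw [← four_rpow hu hv hw ht]
    obtain ⟨e1, e2⟩ := act_lo_hi_of_eq σ η hj
    obtain ⟨e3, e4⟩ := act_lo_hi σ η hk
    have s1 : sg (σ (lo j)) * sg (η k * σ (lo k)) = sg (η k * (σ (lo j) * σ (lo k))) := by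
      simp only [sg_mul]; ring
    simp only [cross, e1, e2, e3, e4, sg_neg, mul_neg, s1]
  · refine (mult_cross_left hjk (hlo j) (hhi j) (hlo k) (hhi k) (ε := fun η => η j)
      (σ (lo j) * σ (lo k)) (hms j)).congr ?_
    filter_upwards [pu, pv, pw, pt] with x hu hv hw ht η
    rw [← four_rpow hu hw hv ht]
    obtain ⟨e1, e2⟩ := act_lo_hi σ η hj
    obtain ⟨e3, e4⟩ := act_lo_hi_of_eq σ η hk
    have s1 : sg (η j * σ (lo j)) * sg (σ (lo k)) = sg (η j * (σ (lo j) * σ (lo k))) := by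
      simp only [sg_mul]; ring
    simp only [cross, e1, e2, e3, e4, sg_neg, neg_mul, s1]
    exact mul_mul_mul_comm _ _ _ _
  · have hD : Mult l width fun x η => sg (η j * η k) *
        ((x (hi j) - x (lo j)) * (x (hi k) - x (lo k))) := by
      refine ((hms j).mul (hms k)).congr (Eventually.of_forall fun x η => ?_)
      rw [sg_mul]; ring
    refine (mult_cross_both hjk (hlo j) (hhi j) (hlo k) (hhi k) (ε := fun η => η j * η k)
      (σ (lo j) * σ (lo k)) hD).congr ?_
    filter_upwards [pu, pv, pw, pt] with x hu hv hw ht η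
    rw [← four_rpow hu hv ht hw]
    obtain ⟨e1, e2⟩ := act_lo_hi σ η hj
    obtain ⟨e3, e4⟩ := act_lo_hi σ η hk
    have s1 : sg (η j * σ (lo j)) * sg (η k * σ (lo k)) =
        sg (η j * η k * (σ (lo j) * σ (lo k))) := by
      simp only [sg_mul]; ring
    simp only [cross, e1, e2, e3, e4, sg_neg, neg_mul, mul_neg, neg_neg, s1]
    rw [mul_comm ((x (hi k) - x (hi j)) ^ _)]

/-- The part of the conformal block of `act η σ` internal to the slots, after division by the
fusion normalization: a factor `1 / width` for each peak or valley. -/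
lemma internal_div {m : ℕ} (σ : Fin (2 * m) → ℤˣ) (η : Fin m → ℤˣ) (x : Fin (2 * m) → ℝ)
    (hx : ∀ j : Fin m, 0 < x (hi j) - x (lo j)) :
    (∏ j : Fin m, (x (hi j) - x (lo j)) ^ (sg (act η σ (lo j)) * sg (act η σ (hi j)) / 2)) /
      ∏ j : Fin m, (x (hi j) - x (lo j)) ^ ((1 : ℝ) / 2) =
    1 / ∏ j ∈ univ.filter (fun j => σ (lo j) ≠ σ (hi j)), (x (hi j) - x (lo j)) := by
  rw [Finset.prod_filter, ← Finset.prod_div_distrib]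
  conv_rhs => rw [one_div, ← Finset.prod_inv_distrib]
  refine Finset.prod_congr rfl fun j _ => ?_
  have hpos := hx j
  by_cases h : σ (lo j) = σ (hi j)
  · have h' := (act_slot η σ j).2 h
    have : (x (hi j) - x (lo j)) ^ ((1 : ℝ) / 2) ≠ 0 := (Real.rpow_pos_of_pos hpos _).ne'
    rw [h', sg_mul_self, div_self this]
    simp [h]
  · have h' : act η σ (lo j) ≠ act η σ (hi j) := fun e => h ((act_slot η σ j).1 e)
    have h2 : sg (act η σ (lo j)) * sg (act η σ (hi j)) = -1 := by
      rcases Int.units_eq_one_or (act η σ (lo j)) with h1 | h1 <;>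
      rcases Int.units_eq_one_or (act η σ (hi j)) with h2 | h2 <;> rw [h1, h2] at h' ⊢ <;>
        simp at h' ⊢
    rw [h2, ← Real.rpow_sub hpos]
    norm_num
    rw [if_neg h, Real.rpow_neg_one]

/-- Existence of the total fusion limit of the pure partition function
(Proposition `purepartitionfusionall`). -/
theorem pureZ_fusion_limit_exists (N : ℕ) (hN : 1 ≤ N)
    (α : PlanarPair (2 * N)) (hα : noFuseLink α)
    (y : Fin (2 * N) → ℝ) (hy : y ∈ chamber (2 * N)) :
    ∃ L : ℝ,
      Tendsto (fun x => pureZ α x / fuseDenom x)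
        (𝓝[chamber (2 * (2 * N))] dup y) (𝓝 L) := by
  by_cases hdet : IsUnit (Mmat (2 * N)).det
  swap
  · -- a non-invertible matrix has inverse `0` by convention
    refine ⟨0, ?_⟩
    simp only [pureZ, Matrix.nonsing_inv_apply_not_isUnit _ hdet, Matrix.zero_apply, zero_mul,
      Finset.sum_const_zero, zero_div]
    exact tendsto_const_nhds
  set c : PlanarPair (2 * N) → ℝ := fun β => (Mmat (2 * N))⁻¹ α β with hc
  have hodd : ∀ (j : Fin (2 * N)) (σ : Fin (2 * (2 * N)) → ℤˣ), σ (lo j) ≠ σ (hi j) →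
      cext c (flipAt (lo j) (hi j) σ) = -cext c σ := by
    intro j σ hσ
    refine cext_flipAt c (lo j) (hi j) rfl (fun γ hγ => ?_) σ hσ
    have h1 := congrFun (congrFun (Matrix.nonsing_inv_mul _ hdet) α) γ
    rw [Matrix.mul_apply, Matrix.one_apply_ne] at h1
    · exact h1
    · rintro rfl
      exact hα j hγ
  set l := 𝓝[chamber (2 * (2 * N))] dup y with hl
  have hlo : ∀ j, Tendsto (fun x : Fin (2 * (2 * N)) → ℝ => x (lo j)) l (𝓝 (y j)) := by
    intro j
    have h := ((continuous_apply (lo j)).tendsto (dup y)).mono_left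
      (nhdsWithin_le_nhds (s := chamber (2 * (2 * N))))
    have e : dup y (lo j) = y j := congrArg y (slot_lo j)
    rwa [e] at h
  have hhi : ∀ j, Tendsto (fun x : Fin (2 * (2 * N)) → ℝ => x (hi j)) l (𝓝 (y j)) := by
    intro j
    have h := ((continuous_apply (hi j)).tendsto (dup y)).mono_left
      (nhdsWithin_le_nhds (s := chamber (2 * (2 * N))))
    have e : dup y (hi j) = y j := congrArg y (slot_hi j)
    rwa [e] at h
  have hpos : ∀ᶠ x in l, ∀ j : Fin (2 * N), 0 < x (hi j) - x (lo j) := by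
    filter_upwards [self_mem_nhdsWithin] with x hx j
    exact sub_pos.mpr (hx _ _ (by simp [lo, hi]))
  have hgood : ∀ σ : Fin (2 * (2 * N)) → ℤˣ,
      Good l width fun x η =>
        (∏ j : Fin (2 * N), ∏ k : Fin (2 * N),
          if j < k then cross (fun i => sg (act η σ i)) x j k else 1) * 1 := by
    intro σ
    refine Mult.prod _ (fun j _ => Mult.prod _ fun k _ => ?_) _ good_one
    by_cases hjk : j < k
    · simp only [if_pos hjk]
      exact mult_cross hlo hhi (fun j => hpos.mono fun x hx => (hx j).ne') σ j k (hy j k hjk)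
    · simp only [if_neg hjk]
      exact mult_of_tendsto tendsto_const_nhds
  choose L hL using fun σ : Fin (2 * (2 * N)) → ℤˣ =>
    hgood σ (univ.filter fun j => σ (lo j) ≠ σ (hi j))
  refine ⟨_, ((tendsto_finsetSum univ fun σ _ => (hL σ).const_mul (cext c σ)).div_const
    (Fintype.card (Fin (2 * N) → ℤˣ) : ℝ)).congr' ?_⟩
  filter_upwards [hpos] with x hx
  set B : (Fin (2 * (2 * N)) → ℤˣ) → ℝ := fun σ => cblock (fun i => sg (σ i)) x with hB
  have hZ : pureZ α x = ∑ σ, cext c σ * B σ := by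
    rw [← sum_cext, pureZ]
    refine Finset.sum_congr rfl fun β _ => ?_
    rw [pairSign_eq_osgn]
    rfl
  -- averaging over all simultaneous flips
  have hflip : ∀ η : Fin (2 * N) → ℤˣ, pureZ α x = ∑ σ, cext c σ *
      ((∏ j ∈ univ.filter (fun j => σ (lo j) ≠ σ (hi j)), sg (η j)) * B (act η σ)) := by
    intro η
    rw [hZ, ← Equiv.sum_comp (Function.Involutive.toPerm (act η) (act_act η))
      (fun σ => cext c σ * B σ)]
    refine Finset.sum_congr rfl fun σ _ => ?_
    change cext c (act η σ) * B (act η σ) = _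
    rw [odd_act (cext c) hodd]
    ring
  have havg : (Fintype.card (Fin (2 * N) → ℤˣ) : ℝ) * pureZ α x = ∑ σ, cext c σ *
      ∑ η : Fin (2 * N) → ℤˣ,
        (∏ j ∈ univ.filter (fun j => σ (lo j) ≠ σ (hi j)), sg (η j)) * B (act η σ) := by
    simp_rw [Finset.mul_sum]
    rw [Finset.sum_comm, ← nsmul_eq_mul, ← Finset.card_univ, ← Finset.sum_const]
    exact Finset.sum_congr rfl fun η _ => hflip η
  have hcard : (Fintype.card (Fin (2 * N) → ℤˣ) : ℝ) ≠ 0 := by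
    exact_mod_cast Fintype.card_ne_zero
  have hden : fuseDenom x = ∏ j : Fin (2 * N), (x (hi j) - x (lo j)) ^ ((1 : ℝ) / 2) := rfl
  rw [div_eq_iff hcard, div_mul_eq_mul_div, mul_comm (pureZ α x), havg, Finset.sum_div]
  refine Finset.sum_congr rfl fun σ _ => ?_
  rw [mul_div_assoc, Finset.sum_div, Finset.sum_div]
  congr 1
  refine Finset.sum_congr rfl fun η _ => ?_
  have e : ∀ P Y I F D : ℝ, I / F = 1 / D → P * Y / D = P * (Y * I) / F :=
    fun P Y I F D h => by rw [← mul_assoc, mul_div_assoc (P * Y) I F, h, mul_one_div]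
  simp only [hB]
  rw [cblock_eq, hden, mul_one]
  exact e _ _ _ _ _ (internal_div σ η x hx)
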